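/- arXiv:1811.00049 — 2 statements merged into one kernel-verified Lean document; each statement's English description precedes it below -/
import Mathlib

section
/- Let f ≤ h, let d be a divisor of gcd(2^f−1, q−1), and let w be a divisor of q+1. Let L̄ ≤ M_ℓ be a subgroup such that |L̄ ∩ Z| = w and L̄ is the internal direct product of L̄ ∩ Z and a subgroup H of order 2^f·d that possesses a normal elementary abelian subgroup U of order 2^f and a cyclic subgroup D of order d with H = U·D and U ∩ D trivial (i.e. H is a semidirect product E_{2^f} ⋊ C_d). Then the number N of orbits of L̄ acting on O equals 2 + (q−2^f)/(2^f·d) + (q/2^f)·(q²−1)/(d·w). -/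
/-!
The orbits are counted with Burnside's lemma. The determinant of `[a, c, τ]` is `τ`, an element of
order dividing `q + 1`, whereas `|H| = 2 ^ f * d` is prime to `q + 1`; so every element of `H` has
the form `[a, c, 1]` (`form_of_pow_eq_one`). Every element of `L` is uniquely `g * z` with `g ∈ H`
and `z ∈ L ∩ Z`.

The curve consists of the `q + 1` points `(x : 1 : 0)` with `x ^ (q + 1) = 1` at infinity and
the `q ^ 3 - q` affine points `(x : y : 1)` (`card_affine`). The center acts trivially at infinity,
so there `g * z` has the fixed points of `g`:
* `q + 1` of them if `g = 1`;
* one if `g ∈ U \ {1}`, where `g` is an involution (`card_line_involution`);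
* two if `g ∈ H \ U`: since `g ^ (2 * d) = 1`, the eigenvalues of `g` lie in `𝔽_q`, they are distinct
  because otherwise `g = g ^ d ∈ U`, and the eigenvectors are isotropic (`card_line_two`).

An affine point fixed by `g * z`, with `z = diag(ε, ε, 1)`, gives `g` the eigenvalue `ε⁻¹`, whose
order divides both `|H|` and `q + 1`; so `ε = 1`, and then `g = 1` since the vector `(x, y)` is
anisotropic (`affine_fixed`). With `w = |L ∩ Z|` the total number of fixed points is
`w * (2 * 2 ^ f * d - 2 ^ f + q) + (q ^ 3 - q)`, and dividing by `|L| = 2 ^ f * d * w` gives the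
formula.
-/

open Matrix

noncomputable def glAct {F : Type*} [Field F] (M : GL (Fin 3) F)
    (x : Projectivization F (Fin 3 → F)) : Projectivization F (Fin 3 → F) :=
  Projectivization.map
    ((LinearMap.GeneralLinearGroup.generalLinearEquiv F (Fin 3 → F)
        (Matrix.GeneralLinearGroup.toLin M)).toLinearMap)
    ((LinearMap.GeneralLinearGroup.generalLinearEquiv F (Fin 3 → F)
        (Matrix.GeneralLinearGroup.toLin M)).injective) x

noncomputable def numOrbits {F : Type*} [Field F] (L : Subgroup (GL (Fin 3) F))
    (O : Set (Projectivization F (Fin 3 → F))) : ℕ :=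
  Nat.card ((fun x => {y | ∃ g ∈ L, glAct g x = y}) '' O :
    Set (Set (Projectivization F (Fin 3 → F))))

def hermitianPts (q : ℕ) (F : Type*) [Field F] : Set (Projectivization F (Fin 3 → F)) :=
  {x | x.rep 1 ^ (q + 1) = x.rep 0 ^ (q + 1) - x.rep 2 ^ (q + 1)}

def MlSet (q : ℕ) (F : Type*) [Field F] : Set (GL (Fin 3) F) :=
  {M | ∃ a c τ : F, a ^ (q + 1) - c ^ (q + 1) = 1 ∧ τ ^ (q + 1) = 1 ∧
    (M : Matrix (Fin 3) (Fin 3) F) = !![a, τ * c ^ q, 0; c, τ * a ^ q, 0; 0, 0, 1]}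

def ZSet (q : ℕ) (F : Type*) [Field F] : Set (GL (Fin 3) F) :=
  {M | ∃ ε : F, ε ^ (q + 1) = 1 ∧ (M : Matrix (Fin 3) (Fin 3) F) = Matrix.diagonal ![ε, ε, 1]}

/-! ### The projective action, orbit counting and the points of the curve -/

lemma glAct_mk {F : Type*} [Field F] (M : GL (Fin 3) F) (v : Fin 3 → F) (hv : v ≠ 0)
    (hv' : (M : Matrix (Fin 3) (Fin 3) F) *ᵥ v ≠ 0) :
    glAct M (Projectivization.mk F v hv)
      = Projectivization.mk F ((M : Matrix (Fin 3) (Fin 3) F) *ᵥ v) hv' := by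
  rfl

lemma gl_mulVec_ne_zero {F : Type*} [Field F] (M : GL (Fin 3) F) {v : Fin 3 → F} (hv : v ≠ 0) :
    (M : Matrix (Fin 3) (Fin 3) F) *ᵥ v ≠ 0 := by
  intro h0
  apply hv
  have h1 : ((M⁻¹ : GL (Fin 3) F) : Matrix (Fin 3) (Fin 3) F) *ᵥ
      ((M : Matrix (Fin 3) (Fin 3) F) *ᵥ v) = 0 := by rw [h0, mulVec_zero]
  rwa [mulVec_mulVec, ← Units.val_mul, inv_mul_cancel, Units.val_one, one_mulVec] at h1

lemma glAct_one {F : Type*} [Field F] (x : Projectivization F (Fin 3 → F)) :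
    glAct 1 x = x := by
  induction x using Projectivization.ind with
  | h v hv =>
    rw [glAct_mk 1 v hv (gl_mulVec_ne_zero 1 hv)]
    simp

lemma glAct_mul {F : Type*} [Field F] (M N : GL (Fin 3) F)
    (x : Projectivization F (Fin 3 → F)) :
    glAct (M * N) x = glAct M (glAct N x) := by
  induction x using Projectivization.ind with
  | h v hv =>
    rw [glAct_mk _ v hv (gl_mulVec_ne_zero _ hv), glAct_mk _ v hv (gl_mulVec_ne_zero _ hv),
      glAct_mk _ _ _ (gl_mulVec_ne_zero _ (gl_mulVec_ne_zero _ hv))]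
    simp [mulVec_mulVec]

/-- The action of a subgroup of `GL(3, F)` on an invariant set of projective points. -/
@[reducible] noncomputable def ptsAction {F : Type*} [Field F] (L : Subgroup (GL (Fin 3) F))
    (O : Set (Projectivization F (Fin 3 → F))) (hinv : ∀ g ∈ L, ∀ x ∈ O, glAct g x ∈ O) :
    MulAction L O where
  smul g x := ⟨glAct g.1 x.1, hinv g.1 g.2 x.1 x.2⟩
  one_smul x := Subtype.ext (glAct_one x.1)
  mul_smul g k x := Subtype.ext (glAct_mul g.1 k.1 x.1)

/-- Burnside's lemma, for `numOrbits`. -/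
lemma burnside {F : Type*} [Field F] [Finite F] (L : Subgroup (GL (Fin 3) F))
    (O : Set (Projectivization F (Fin 3 → F))) (hinv : ∀ g ∈ L, ∀ x ∈ O, glAct g x ∈ O)
    [Fintype L] :
    ∑ g : L, Nat.card {x : Projectivization F (Fin 3 → F) // x ∈ O ∧ glAct g.1 x = x}
      = numOrbits L O * Nat.card L := by
  classical
  let := ptsAction L O hinv
  have : Finite (Projectivization F (Fin 3 → F)) := by
    unfold Projectivization
    infer_instance
  have : Fintype O := Fintype.ofFinite _
  let : Fintype (Quotient (MulAction.orbitRel L O)) := Fintype.ofFinite _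
  have hB := MulAction.sum_card_fixedBy_eq_card_orbits_mul_card_group L O
  have h1 : ∀ g : L, Fintype.card (MulAction.fixedBy O g)
      = Nat.card {x : Projectivization F (Fin 3 → F) // x ∈ O ∧ glAct g.1 x = x} := by
    intro g
    rw [← Nat.card_eq_fintype_card]
    refine Nat.card_congr ⟨fun x => ⟨x.1.1, x.1.2, congrArg Subtype.val x.2⟩,
      fun x => ⟨⟨x.1, x.2.1⟩, Subtype.ext x.2.2⟩, fun x => rfl, fun x => rfl⟩
  have h2 : numOrbits L O = Fintype.card (Quotient (MulAction.orbitRel L O)) := by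
    unfold numOrbits
    rw [← Nat.card_eq_fintype_card, Set.image_eq_range]
    refine (Nat.card_congr ((Quotient.congrRight ?_).trans
      (Setoid.quotientKerEquivRange _))).symm
    intro x y
    rw [MulAction.orbitRel_apply, Setoid.ker_def]
    constructor
    · rintro ⟨g, hg⟩
      have hg' : glAct g.1 y.1 = x.1 := congrArg Subtype.val hg
      ext z
      constructor
      · rintro ⟨k, hk, rfl⟩
        exact ⟨k * g.1, L.mul_mem hk g.2, by rw [glAct_mul, hg']⟩
      · rintro ⟨k, hk, rfl⟩
        refine ⟨k * g.1⁻¹, L.mul_mem hk (L.inv_mem g.2), ?_⟩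
        rw [← hg', ← glAct_mul, inv_mul_cancel_right]
    · intro hxy
      have hx : x.1 ∈ {z | ∃ g ∈ L, glAct g y.1 = z} := by
        rw [← hxy]
        exact ⟨1, L.one_mem, glAct_one _⟩
      obtain ⟨g, hg, hgy⟩ := hx
      exact ⟨⟨g, hg⟩, Subtype.ext hgy⟩
  rw [h2, Nat.card_eq_fintype_card, ← hB]
  exact Finset.sum_congr rfl fun g _ => (h1 g).symm

lemma mem_hermitianPts_mk {F : Type*} [Field F] (q : ℕ) (v : Fin 3 → F) (hv : v ≠ 0) :
    Projectivization.mk F v hv ∈ hermitianPts q F ↔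
      v 1 ^ (q + 1) = v 0 ^ (q + 1) - v 2 ^ (q + 1) := by
  obtain ⟨u, hu⟩ := Projectivization.exists_smul_eq_mk_rep F v hv
  simp only [hermitianPts, Set.mem_ofPred_eq, ← hu, Pi.smul_apply, Units.smul_def, smul_eq_mul,
    mul_pow, ← mul_sub]
  exact mul_right_inj' (pow_ne_zero _ u.ne_zero)

/-- The points of the Hermitian curve split into those at infinity, `(x : 1 : 0)` with
`x ^ (q + 1) = 1`, and the affine ones `(x : y : 1)`; this counts the fixed points of both kinds. -/
lemma card_fixed {F : Type*} [Field F] [Finite F] (q : ℕ) (g : GL (Fin 3) F) (a b c e : F)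
    (hg : (g : Matrix (Fin 3) (Fin 3) F) = !![a, b, 0; c, e, 0; 0, 0, 1]) :
    Nat.card {x : Projectivization F (Fin 3 → F) // x ∈ hermitianPts q F ∧ glAct g x = x}
      = Nat.card {x : F // x ^ (q + 1) = 1 ∧ a * x + b = (c * x + e) * x}
        + Nat.card {p : F × F // p.1 ^ (q + 1) - p.2 ^ (q + 1) = 1 ∧
            a * p.1 + b * p.2 = p.1 ∧ c * p.1 + e * p.2 = p.2} := by
  have hne1 : ∀ x : F, ![x, 1, 0] ≠ 0 := fun x h => by simpa using congrFun h 1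
  have hne2 : ∀ p : F × F, ![p.1, p.2, 1] ≠ 0 := fun p h => by simpa using congrFun h 2
  have hmul : ∀ v : Fin 3 → F, (g : Matrix (Fin 3) (Fin 3) F) *ᵥ v
      = ![a * v 0 + b * v 1, c * v 0 + e * v 1, v 2] := by
    intro v
    rw [hg]
    ext i
    fin_cases i <;> simp [mulVec, dotProduct, Fin.sum_univ_three]
  have hfix : ∀ (v : Fin 3 → F) (hv : v ≠ 0),
      glAct g (Projectivization.mk F v hv) = Projectivization.mk F v hv ↔
        ∃ t : F, t * v 0 = a * v 0 + b * v 1 ∧ t * v 1 = c * v 0 + e * v 1 ∧ t * v 2 = v 2 := by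
    intro v hv
    rw [glAct_mk _ v hv (gl_mulVec_ne_zero _ hv), Projectivization.mk_eq_mk_iff']
    simp only [hmul, funext_iff, Fin.forall_fin_succ]
    simp
  rw [← Nat.card_sum]
  symm
  refine Nat.card_congr (Equiv.ofBijective (Sum.elim
    (fun x => ⟨Projectivization.mk F ![x.1, 1, 0] (hne1 x.1), ?_, ?_⟩)
    (fun p => ⟨Projectivization.mk F ![p.1.1, p.1.2, 1] (hne2 p.1), ?_, ?_⟩)) ⟨?_, ?_⟩)
  · rw [mem_hermitianPts_mk]
    simp [x.2.1]
  · rw [hfix]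
    exact ⟨c * x.1 + e, by simp [x.2.2]⟩
  · rw [mem_hermitianPts_mk]
    have := p.2.1
    simp only [cons_val_zero, cons_val_one, cons_val, one_pow]
    linear_combination -this
  · rw [hfix]
    exact ⟨1, by simp [p.2.2]⟩
  · rintro (x | p) (y | r) hxy
    all_goals
      simp only [Sum.elim_inl, Sum.elim_inr, Subtype.mk.injEq, Projectivization.mk_eq_mk_iff'] at hxy
      obtain ⟨t, ht⟩ := hxy
      simp only [funext_iff, Fin.forall_fin_succ] at ht
      simp at ht
    · obtain ⟨h0, rfl⟩ := ht
      congr 1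
      exact Subtype.ext (by simpa using h0.symm)
    · obtain ⟨h0, h1, rfl⟩ := ht
      simp at h1
    · obtain ⟨h0, h1, rfl⟩ := ht
      congr 1
      exact Subtype.ext (Prod.ext (by simpa using h0.symm) (by simpa using h1.symm))
  · rintro ⟨x, hx, hgx⟩
    induction x using Projectivization.ind with
    | h v hv =>
    rw [mem_hermitianPts_mk] at hx
    rw [hfix] at hgx
    obtain ⟨t, ht0, ht1, ht2⟩ := hgx
    by_cases h2 : v 2 = 0
    · have h1 : v 1 ≠ 0 := by
        intro h1
        apply hv
        have h0 : v 0 = 0 := by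
          rw [h1, h2] at hx
          simpa using hx.symm
        ext i
        fin_cases i <;> simp [h0, h1, h2]
      rw [h2] at hx
      refine ⟨Sum.inl ⟨v 0 / v 1, ?_, ?_⟩, ?_⟩
      · rw [div_pow, div_eq_one_iff_eq (pow_ne_zero _ h1), hx]
        simp
      · field_simp
        linear_combination (v 0) * ht1 - (v 1) * ht0
      · simp only [Sum.elim_inl, Subtype.mk.injEq, Projectivization.mk_eq_mk_iff']
        refine ⟨(v 1)⁻¹, ?_⟩
        ext i
        fin_cases i <;> simp [h1, h2, div_eq_inv_mul]
    · have ht : t = 1 := mul_right_cancel₀ h2 (by rw [ht2, one_mul])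
      subst ht
      refine ⟨Sum.inr ⟨(v 0 / v 2, v 1 / v 2), ?_, ?_, ?_⟩, ?_⟩
      · have := pow_ne_zero (q + 1) h2
        simp only [div_pow]
        rw [← sub_div, div_eq_one_iff_eq this]
        linear_combination -hx
      · field_simp
        linear_combination - ht0
      · field_simp
        linear_combination - ht1
      · simp only [Sum.elim_inr, Subtype.mk.injEq, Projectivization.mk_eq_mk_iff']
        refine ⟨(v 2)⁻¹, ?_⟩
        ext i
        fin_cases i <;> simp [h2, div_eq_inv_mul]

/-! ### Norms, affine points and involutions -/

lemma card_pow_eq_one {F : Type*} [Field F] [Fintype F] {q : ℕ}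
    (hF : Fintype.card F = q ^ 2) : Nat.card {x : F // x ^ (q + 1) = 1} = q + 1 := by
  have hu : Nat.card Fˣ = (q + 1) * (q - 1) := by
    rw [Nat.card_units, Nat.card_eq_fintype_card, hF]
    exact Nat.sq_sub_sq q 1
  have h1 := IsCyclic.card_powMonoidHom_ker (G := Fˣ) (q + 1)
  rw [hu, Nat.gcd_eq_right (dvd_mul_right _ _)] at h1
  have hne : ∀ x : {x : F // x ^ (q + 1) = 1}, x.1 ≠ 0 := by
    intro x hx
    simpa [hx] using x.2
  have hmem : ∀ u : Fˣ, u ∈ (powMonoidHom (q + 1) : Fˣ →* Fˣ).ker ↔ u.1 ^ (q + 1) = 1 := by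
    intro u
    rw [MonoidHom.mem_ker, powMonoidHom_apply, Units.ext_iff]
    simp
  exact (Nat.card_congr ⟨fun x => ⟨Units.mk0 x.1 (hne x), (hmem _).2 x.2⟩,
    fun u => ⟨u.1, (hmem _).1 u.2⟩, fun x => rfl,
    fun u => Subtype.ext (Units.ext rfl)⟩).trans h1

/-- Surjectivity of the norm `x ↦ x ^ (q + 1)` from `F` to `𝔽_q`, on nonzero elements. -/
lemma exists_pow_eq {F : Type*} [Field F] [Fintype F] {q : ℕ} (hq2 : 2 ≤ q)
    (hF : Fintype.card F = q ^ 2) {n : F} (hn : n ≠ 0) (hnq : n ^ q = n) :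
    ∃ x : F, x ^ (q + 1) = n := by
  have hu : Nat.card Fˣ = (q + 1) * (q - 1) := by
    rw [Nat.card_units, Nat.card_eq_fintype_card, hF]
    exact Nat.sq_sub_sq q 1
  have h1 := IsCyclic.card_powMonoidHom_ker (G := Fˣ) (q - 1)
  rw [hu, Nat.gcd_eq_right (dvd_mul_left _ _)] at h1
  have h2 := IsCyclic.card_powMonoidHom_range (G := Fˣ) (q + 1)
  rw [hu, Nat.gcd_eq_right (dvd_mul_right _ _), Nat.mul_div_cancel_left _ (by lia)] at h2
  have hle : (powMonoidHom (q + 1) : Fˣ →* Fˣ).range ≤ (powMonoidHom (q - 1) : Fˣ →* Fˣ).ker := by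
    rintro _ ⟨x, rfl⟩
    rw [MonoidHom.mem_ker, powMonoidHom_apply, powMonoidHom_apply, ← pow_mul, ← hu,
      pow_card_eq_one']
  have heq := Subgroup.eq_of_le_of_card_ge hle (by rw [h1, h2])
  have hmem : Units.mk0 n hn ∈ (powMonoidHom (q - 1) : Fˣ →* Fˣ).ker := by
    rw [MonoidHom.mem_ker]
    refine Units.ext ?_
    simp only [powMonoidHom_apply, Units.val_pow_eq_pow_val, Units.val_mk0, Units.val_one]
    apply mul_right_cancel₀ hn
    rw [← pow_succ, one_mul, Nat.sub_add_cancel (by lia), hnq]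
  rw [← heq] at hmem
  obtain ⟨x, hx⟩ := hmem
  exact ⟨x.1, by simpa using congrArg Units.val hx⟩

lemma card_pow_eq {F : Type*} [Field F] [Fintype F] {q : ℕ} (hq2 : 2 ≤ q)
    (hF : Fintype.card F = q ^ 2) {n : F} (hn : n ≠ 0) (hnq : n ^ q = n) :
    Nat.card {x : F // x ^ (q + 1) = n} = q + 1 := by
  obtain ⟨y, hy⟩ := exists_pow_eq hq2 hF hn hnq
  have hy0 : y ≠ 0 := by
    rintro rfl
    apply hn
    rw [← hy]
    simp
  refine (Nat.card_congr ⟨fun x => ⟨x.1 / y, by rw [div_pow, x.2, hy, div_self hn]⟩,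
    fun x => ⟨x.1 * y, by rw [mul_pow, x.2, hy, one_mul]⟩, fun x => ?_, fun x => ?_⟩).trans
    (card_pow_eq_one hF)
  · exact Subtype.ext (div_mul_cancel₀ _ hy0)
  · exact Subtype.ext (mul_div_cancel_right₀ _ hy0)

/-- The Hermitian curve has `q ^ 3 - q` points off the line `Z = 0`: for given `y` the equation
`x ^ (q + 1) = 1 + y ^ (q + 1)` has one solution if `y ^ (q + 1) = 1` and `q + 1` otherwise. -/
lemma card_affine {F : Type*} [Field F] [Fintype F] [CharP F 2] {q : ℕ} (hq2 : 2 ≤ q)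
    (hF : Fintype.card F = q ^ 2) (hadd : ∀ x y : F, (x + y) ^ q = x ^ q + y ^ q)
    (hqq : ∀ x : F, (x ^ q) ^ q = x) :
    Nat.card {p : F × F // p.1 ^ (q + 1) - p.2 ^ (q + 1) = 1} = q ^ 3 - q := by
  classical
  have h1 : Nat.card {p : F × F // p.1 ^ (q + 1) - p.2 ^ (q + 1) = 1}
      = Nat.card (Σ y : F, {x : F // x ^ (q + 1) = 1 + y ^ (q + 1)}) :=
    Nat.card_congr ⟨fun p => ⟨p.1.2, p.1.1, by linear_combination p.2⟩,
      fun p => ⟨(p.2.1, p.1), by linear_combination p.2.2⟩, fun p => rfl, fun p => rfl⟩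
  have hy : ∀ y : F, Nat.card {x : F // x ^ (q + 1) = 1 + y ^ (q + 1)}
      = if y ^ (q + 1) = 1 then 1 else q + 1 := by
    intro y
    split_ifs with h
    · rw [h, CharTwo.add_self_eq_zero]
      simp
    · apply card_pow_eq hq2 hF
      · intro h0
        apply h
        rw [CharTwo.add_eq_zero] at h0
        exact h0.symm
      · rw [hadd, one_pow, pow_succ, mul_pow, hqq, mul_comm]
  have hμ : (Finset.univ.filter fun y : F => y ^ (q + 1) = 1).card = q + 1 := by
    have := card_pow_eq_one hF
    rwa [Nat.card_eq_fintype_card, Fintype.card_subtype] at this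
  have hμ' : (Finset.univ.filter fun y : F => ¬ y ^ (q + 1) = 1).card = q ^ 2 - (q + 1) := by
    have := Finset.card_filter_add_card_filter_not (s := (Finset.univ : Finset F))
      (fun y : F => y ^ (q + 1) = 1)
    rw [hμ, Finset.card_univ, hF] at this
    lia
  rw [h1, Nat.card_sigma, Finset.sum_congr rfl fun y _ => hy y, Finset.sum_ite, Finset.sum_const,
    Finset.sum_const, hμ, hμ']
  obtain ⟨k, rfl⟩ : ∃ k, q = k + 2 := ⟨q - 2, by lia⟩
  have e1 : (k + 2) ^ 2 - (k + 2 + 1) = k ^ 2 + 3 * k + 1 := by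
    rw [Nat.sub_eq_iff_eq_add] <;> nlinarith
  have e2 : (k + 2) ^ 3 - (k + 2) = k ^ 3 + 6 * k ^ 2 + 11 * k + 6 := by
    rw [Nat.sub_eq_iff_eq_add]
    · ring
    · nlinarith [sq_nonneg (k + 2)]
  rw [e1, e2]
  simp only [smul_eq_mul]
  ring

lemma eq_one_of_sq {F : Type*} [Field F] [CharP F 2] {x : F} (h : x ^ 2 = 1) : x = 1 := by
  rw [sq_eq_one_iff] at h
  rcases h with h | h
  · exact h
  · rw [h, CharTwo.neg_eq]

/-- An involution `[a, c, 1]`, that is, `c ≠ 0` and `a ^ q = a`, fixes exactly one point at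
infinity: the fixed-point equation is `c * x ^ 2 = c ^ q`, which has a unique root. -/
lemma card_line_involution {F : Type*} [Field F] [Finite F] [CharP F 2] {q : ℕ} (hq2 : 2 ≤ q)
    (hqq : ∀ x : F, (x ^ q) ^ q = x) {a c : F} (hc : c ≠ 0) (ha : a ^ q = a) :
    Nat.card {x : F // x ^ (q + 1) = 1 ∧ a * x + c ^ q = (c * x + a ^ q) * x} = 1 := by
  obtain ⟨x, hx⟩ := FiniteField.isSquare_of_char_two (ringChar.eq F 2) (c ^ (q - 1))
  have hcq : c ^ q = c ^ (q - 1) * c := by rw [← pow_succ, Nat.sub_add_cancel (by lia)]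
  simp only [ha]
  rw [Nat.card_eq_one_iff_unique]
  refine ⟨⟨fun y z => Subtype.ext ?_⟩, ⟨⟨x, ?_, ?_⟩⟩⟩
  · have h1 := y.2.2
    have h2 := z.2.2
    have h3 : c * ((y.1 - z.1) * (y.1 - z.1)) = 0 := by
      have h4 : (2 : F) = 0 := CharTwo.two_eq_zero
      linear_combination h2 - h1 + (c * z.1 ^ 2 - c * y.1 * z.1) * h4
    simpa [hc, sub_eq_zero] using h3
  · apply eq_one_of_sq
    have h5 : c ^ (q * q) = c := by rw [pow_mul, hqq]
    have h6 : (q - 1) * (q + 1) + 1 = q * q := by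
      obtain ⟨k, rfl⟩ : ∃ k, q = k + 1 := ⟨q - 1, by lia⟩
      simp only [Nat.add_sub_cancel]
      ring
    have h7 : (x ^ (q + 1)) ^ 2 = (x * x) ^ (q + 1) := by ring
    rw [h7, ← hx, ← pow_mul]
    apply mul_right_cancel₀ hc
    rw [← pow_succ, h6, h5, one_mul]
  · rw [hcq, hx]
    ring

/-! ### Fixed points of the elements `[a, c, 1]` -/

lemma eigenvalue_pow {K : Type*} [Field K] {M : Matrix (Fin 3) (Fin 3) K} {n : ℕ}
    (hM : M ^ n = 1) {v : Fin 3 → K} (hv : v ≠ 0) {μ : K} (hμ : M *ᵥ v = μ • v) :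
    μ ^ n = 1 := by
  have h1 : ∀ k : ℕ, M ^ k *ᵥ v = μ ^ k • v := by
    intro k
    induction k with
    | zero => simp
    | succ k ih => rw [pow_succ, ← mulVec_mulVec, hμ, mulVec_smul, ih, smul_smul, pow_succ']
  have h2 := h1 n
  rw [hM, one_mulVec] at h2
  obtain ⟨i, hi⟩ := Function.ne_iff.mp hv
  have h3 := congrFun h2 i
  simp only [Pi.smul_apply, smul_eq_mul] at h3
  exact mul_right_cancel₀ hi (by rw [← h3, one_mul])

lemma pow_q_eq_self {K : Type*} [Field K] [CharP K 2] {q d : ℕ} (hq2 : 2 ≤ q) (hd : d ∣ q - 1)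
    {x : K} (hx : x ^ (2 * d) = 1) : x ^ q = x := by
  have h1 : x ^ d = 1 := eq_one_of_sq (by rw [← pow_mul, mul_comm, hx])
  obtain ⟨k, hk⟩ := hd
  have h2 : q = d * k + 1 := by lia
  rw [h2, pow_succ, pow_mul, h1, one_pow, one_mul]

/-- If `[a, c, 1]` has order dividing `2 * d` with `d ∣ q - 1`, and `c ≠ 0`, then the characteristic
polynomial of its upper left block has a root in `𝔽_q`. The root is found in an algebraic closure;
its order divides `q - 1`, so it lies in `F` and is fixed by `x ↦ x ^ q`. -/
lemma exists_eigenvalue {F : Type*} [Field F] [Fintype F] [CharP F 2] {q d : ℕ} (hq2 : 2 ≤ q)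
    (hF : Fintype.card F = q ^ 2) (hd : d ∣ q - 1) {a c : F}
    (hac : a ^ (q + 1) - c ^ (q + 1) = 1) (hc : c ≠ 0)
    (hM : !![a, c ^ q, 0; c, a ^ q, 0; 0, 0, 1] ^ (2 * d) = 1) :
    ∃ l : F, l ^ 2 + (a + a ^ q) * l + 1 = 0 ∧ l ^ q = l := by
  classical
  let K := AlgebraicClosure F
  let ι : F →+* K := algebraMap F K
  have : CharP K 2 := charP_of_injective_algebraMap ι.injective 2
  have h2 : (2 : K) = 0 := CharTwo.two_eq_zero
  obtain ⟨m, hm⟩ : ∃ m : K, m ^ 2 + ι (a + a ^ q) * m + 1 = 0 := by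
    have hdeg : (Polynomial.C 1 * Polynomial.X ^ 2 + Polynomial.C (ι (a + a ^ q)) * Polynomial.X
        + Polynomial.C (1 : K)).degree = 2 := Polynomial.degree_quadratic one_ne_zero
    obtain ⟨m, hm⟩ := IsAlgClosed.exists_root _ (by rw [hdeg]; decide)
    exact ⟨m, by simpa [Polynomial.IsRoot] using hm⟩
  have hac' := congrArg ι hac
  have hm2 : m ^ (2 * d) = 1 := by
    refine eigenvalue_pow (M := ι.mapMatrix !![a, c ^ q, 0; c, a ^ q, 0; 0, 0, 1])
      (v := ![m + ι (a ^ q), ι c, 0]) (by rw [← map_pow, hM, map_one]) ?_ ?_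
    · intro h0
      have := congrFun h0 1
      simp [hc] at this
    · simp only [map_add, map_sub, map_pow, map_one] at hac' hm ⊢
      ext i
      fin_cases i
      · simp [mulVec, dotProduct, Fin.sum_univ_three]
        linear_combination hac' - hm + (ι c ^ (q + 1) + ι a * m + 1) * h2
      · simp [mulVec, dotProduct, Fin.sum_univ_three]
        linear_combination (ι c * ι a ^ q) * h2
      · simp [mulVec, dotProduct, Fin.sum_univ_three]
  have hmq : m ^ q = m := pow_q_eq_self hq2 hd hm2
  obtain ⟨l, rfl⟩ : ∃ l : F, ι l = m := by
    have hs : (Polynomial.X ^ Fintype.card F - Polynomial.X : Polynomial F).Splits := by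
      simpa using (FiniteField.isSplittingField_sub F F).splits
    refine hs.mem_range_of_isRoot (FiniteField.X_pow_card_sub_X_ne_zero F Fintype.one_lt_card) ?_
    simp only [hF, Polynomial.IsRoot, Polynomial.map_sub, Polynomial.map_pow, Polynomial.map_X,
      Polynomial.eval_sub, Polynomial.eval_pow, Polynomial.eval_X]
    rw [sq, pow_mul, hmq, hmq, sub_self]
  refine ⟨l, ι.injective ?_, ι.injective ?_⟩
  · simpa using hm
  · simpa using hmq

/-- An element `[a, c, 1]` with `a ^ q ≠ a` (equivalently, not unipotent) and of order dividing
`2 * d`, where `d ∣ q - 1`, fixes exactly two points at infinity. With `l` an eigenvalue in `𝔽_q`,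
the other one is `l + (a + a ^ q)`, and the two eigenvectors are isotropic. -/
lemma card_line_two {F : Type*} [Field F] [Fintype F] [CharP F 2] {q d : ℕ} (hq2 : 2 ≤ q)
    (hF : Fintype.card F = q ^ 2) (hadd : ∀ x y : F, (x + y) ^ q = x ^ q + y ^ q)
    (hqq : ∀ x : F, (x ^ q) ^ q = x) (hd : d ∣ q - 1) {a c : F}
    (hac : a ^ (q + 1) - c ^ (q + 1) = 1) (ht : a ^ q ≠ a)
    (hM : !![a, c ^ q, 0; c, a ^ q, 0; 0, 0, 1] ^ (2 * d) = 1) :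
    Nat.card {x : F // x ^ (q + 1) = 1 ∧ a * x + c ^ q = (c * x + a ^ q) * x} = 2 := by
  have h2 : (2 : F) = 0 := CharTwo.two_eq_zero
  have hc : c ≠ 0 := by
    rintro rfl
    apply ht
    apply pow_q_eq_self hq2 hd
    refine eigenvalue_pow (v := ![1, 0, 0]) hM (fun h0 => by simpa using congrFun h0 0) ?_
    ext i
    fin_cases i <;> simp [mulVec, dotProduct, Fin.sum_univ_three]
  obtain ⟨l, hl, hlq⟩ := exists_eigenvalue hq2 hF hd hac hc hM
  have hnorm : (l + a ^ q) * (l + a) = c ^ (q + 1) := by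
    linear_combination hl + hac
  have hx : ∀ x : F, (x ^ (q + 1) = 1 ∧ a * x + c ^ q = (c * x + a ^ q) * x) ↔
      x ∈ ({(l + a ^ q) / c, (l + a) / c} : Set F) := by
    intro x
    have hfac : c * (a * x + c ^ q - (c * x + a ^ q) * x)
        = - ((c * x - (l + a ^ q)) * (c * x - (l + a))) := by
      have : c * c ^ q = (l + a ^ q) * (l + a) := by rw [hnorm]; ring
      linear_combination this + ((l + a ^ q) * (l + a) - c * a ^ q * x - c * x * l) * h2
    rw [Set.mem_insert_iff, Set.mem_singleton_iff, eq_div_iff hc, eq_div_iff hc]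
    constructor
    · rintro ⟨-, hx⟩
      rw [hx, sub_self, mul_zero, zero_eq_neg, mul_eq_zero, sub_eq_zero, sub_eq_zero] at hfac
      rwa [mul_comm x]
    · intro hx
      constructor
      · have hxc : (x * c) ^ (q + 1) = c ^ (q + 1) := by
          rw [← hnorm]
          rcases hx with hx | hx
          · rw [hx, pow_succ, hadd, hlq, hqq]
            ring
          · rw [hx, pow_succ, hadd, hlq]
        rw [mul_pow] at hxc
        exact mul_right_cancel₀ (pow_ne_zero _ hc) (by rw [hxc, one_mul])
      · have hz : c * (a * x + c ^ q - (c * x + a ^ q) * x) = 0 := by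
          rw [hfac, neg_eq_zero, mul_eq_zero, sub_eq_zero, sub_eq_zero]
          rwa [mul_comm x] at hx
        rw [mul_eq_zero, sub_eq_zero] at hz
        exact hz.resolve_left hc
  simp only [hx]
  have hne : (l + a ^ q) / c ≠ (l + a) / c := by
    intro h
    rw [div_left_inj' hc] at h
    exact ht (add_left_cancel h)
  exact Set.ncard_pair hne

/-- If `ε • [a, c, 1]` fixes an affine point, where `ε` has norm `1` and `[a, c, 1]` has order
prime to `q + 1`, then both factors are trivial. -/
lemma affine_fixed {F : Type*} [Field F] {q n : ℕ}
    (hadd : ∀ x y : F, (x + y) ^ q = x ^ q + y ^ q)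
    (hqq : ∀ x : F, (x ^ q) ^ q = x) (hn : n.Coprime (q + 1)) {a c ε x y : F}
    (hac : a ^ (q + 1) - c ^ (q + 1) = 1) (hε : ε ^ (q + 1) = 1)
    (hM : !![a, c ^ q, 0; c, a ^ q, 0; 0, 0, 1] ^ n = 1)
    (hxy : x ^ (q + 1) - y ^ (q + 1) = 1)
    (h1 : ε * a * x + ε * c ^ q * y = x) (h2 : ε * c * x + ε * a ^ q * y = y) :
    ε = 1 ∧ a = 1 ∧ c = 0 := by
  have hε0 : ε ≠ 0 := by
    rintro rfl
    simp at hε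
  have hv : ![x, y, 0] ≠ 0 := by
    intro h0
    have hx := congrFun h0 0
    have hy := congrFun h0 1
    simp at hx hy
    simp [hx, hy] at hxy
  have hpow : ε⁻¹ ^ n = 1 := by
    refine eigenvalue_pow hM hv ?_
    ext i
    fin_cases i
    · simp [mulVec, dotProduct, Fin.sum_univ_three]
      field_simp
      linear_combination h1
    · simp [mulVec, dotProduct, Fin.sum_univ_three]
      field_simp
      linear_combination h2
    · simp [mulVec, dotProduct, Fin.sum_univ_three]
  have hε1 : ε = 1 := by
    rw [inv_pow, inv_eq_one] at hpow
    rw [← orderOf_dvd_iff_pow_eq_one] at hpow hε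
    rw [← orderOf_eq_one_iff]
    exact Nat.eq_one_of_dvd_coprimes hn hpow hε
  subst hε1
  have h3 : c ^ q * x ^ q + a * y ^ q = y ^ q := by
    have := congrArg (· ^ q) h2
    simpa [hadd, mul_pow, hqq] using this
  have ha : a = 1 := by
    have h4 : (a - 1) * (x ^ (q + 1) - y ^ (q + 1)) = 0 := by
      linear_combination x ^ q * h1 - y * h3
    rw [hxy, mul_one] at h4
    exact sub_eq_zero.mp h4
  subst ha
  simpa using hac

/-! ### The groups `M_ℓ` and `Z` -/

/-- The center `Z` of `M_ℓ`, as a subgroup. -/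
def ZSub (q : ℕ) (F : Type*) [Field F] : Subgroup (GL (Fin 3) F) where
  carrier := ZSet q F
  one_mem' := ⟨1, one_pow _, by
    ext i j
    fin_cases i <;> fin_cases j <;> simp⟩
  mul_mem' := by
    rintro g k ⟨ε, hε, hg⟩ ⟨δ, hδ, hk⟩
    refine ⟨ε * δ, by rw [mul_pow, hε, hδ, one_mul], ?_⟩
    rw [Units.val_mul, hg, hk, diagonal_mul_diagonal]
    congr 1
    ext i
    fin_cases i <;> simp
  inv_mem' := by
    rintro g ⟨ε, hε, hg⟩
    have hε0 : ε ≠ 0 := by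
      rintro rfl
      simp at hε
    refine ⟨ε⁻¹, by rw [inv_pow, hε, inv_one], ?_⟩
    apply Units.inv_eq_of_mul_eq_one_right
    rw [hg, diagonal_mul_diagonal, ← diagonal_one]
    congr 1
    ext i
    fin_cases i <;> simp [hε0]

lemma commute_of_mem {F : Type*} [Field F] {q : ℕ} {g z : GL (Fin 3) F} (hg : g ∈ MlSet q F)
    (hz : z ∈ ZSet q F) : Commute g z := by
  obtain ⟨a, c, τ, -, -, hg⟩ := hg
  obtain ⟨ε, -, hz⟩ := hz
  apply Units.ext
  rw [Units.val_mul, Units.val_mul, hg, hz]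
  ext i j
  fin_cases i <;> fin_cases j <;> simp [mul_comm]

lemma mapsTo_hermitianPts {F : Type*} [Field F] {q : ℕ}
    (hadd : ∀ x y : F, (x + y) ^ q = x ^ q + y ^ q)
    (hqq : ∀ x : F, (x ^ q) ^ q = x) {g : GL (Fin 3) F} (hg : g ∈ MlSet q F)
    {x : Projectivization F (Fin 3 → F)} (hx : x ∈ hermitianPts q F) :
    glAct g x ∈ hermitianPts q F := by
  obtain ⟨a, c, τ, hac, hτ, hg⟩ := hg
  induction x using Projectivization.ind with
  | h v hv =>
    rw [mem_hermitianPts_mk] at hx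
    rw [glAct_mk _ v hv (gl_mulVec_ne_zero _ hv), mem_hermitianPts_mk, hg]
    simp only [mulVec, dotProduct, Fin.sum_univ_three]
    simp only [of_apply, cons_val', cons_val_zero, cons_val_one, cons_val, cons_val_fin_one,
      zero_mul, one_mul, add_zero, zero_add]
    simp only [pow_succ, hadd, mul_pow, hqq] at hac hτ hx ⊢
    linear_combination (v 1 ^ q * v 1) * (τ ^ q * τ) * hac + (v 1 ^ q * v 1) * hτ + hx
      - (v 0 ^ q * v 0) * hac

/-- The determinant of `[a, c, τ]` is `τ`, so an element of order prime to `q + 1` has `τ = 1`. -/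
lemma form_of_pow_eq_one {F : Type*} [Field F] {q n : ℕ} (hn : n.Coprime (q + 1))
    {g : GL (Fin 3) F} (hg : g ∈ MlSet q F) (hgn : g ^ n = 1) :
    ∃ a c : F, a ^ (q + 1) - c ^ (q + 1) = 1 ∧
      (g : Matrix (Fin 3) (Fin 3) F) = !![a, c ^ q, 0; c, a ^ q, 0; 0, 0, 1] := by
  obtain ⟨a, c, τ, hac, hτ, hg⟩ := hg
  have hdet : (g : Matrix (Fin 3) (Fin 3) F).det = τ := by
    rw [hg, det_fin_three]
    simp
    linear_combination τ * hac
  have hτn : τ ^ n = 1 := by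
    rw [← hdet, ← det_pow, ← Units.val_pow_eq_pow_val, hgn, Units.val_one, det_one]
  have hτ1 : τ = 1 := by
    rw [← orderOf_dvd_iff_pow_eq_one] at hτn hτ
    rw [← orderOf_eq_one_iff]
    exact Nat.eq_one_of_dvd_coprimes hn hτn hτ
  refine ⟨a, c, hac, ?_⟩
  rw [hg, hτ1, one_mul, one_mul]

/-- In characteristic two, `[a, c, 1]` has square `1` as soon as the trace `a + a ^ q` of its upper
left block vanishes, by Cayley–Hamilton. -/
lemma sq_eq_one_of_trace {F : Type*} [Field F] [CharP F 2] {q : ℕ} {g : GL (Fin 3) F} {a c : F}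
    (hac : a ^ (q + 1) - c ^ (q + 1) = 1) (ha : a ^ q = a)
    (hg : (g : Matrix (Fin 3) (Fin 3) F) = !![a, c ^ q, 0; c, a ^ q, 0; 0, 0, 1]) :
    g ^ 2 = 1 := by
  have h2 : (2 : F) = 0 := CharTwo.two_eq_zero
  rw [ha] at hg
  rw [pow_succ, ha] at hac
  apply Units.ext
  rw [sq, Units.val_mul, hg]
  ext i j
  fin_cases i <;> fin_cases j <;> simp [Matrix.mul_apply, Fin.sum_univ_three]
  · linear_combination hac + c ^ q * c * h2
  · linear_combination a * c ^ q * h2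
  · linear_combination a * c * h2
  · linear_combination hac + c ^ q * c * h2

lemma trace_of_sq_eq_one {F : Type*} [Field F] [CharP F 2] {q : ℕ} (hq : q ≠ 0)
    {g : GL (Fin 3) F} {a c : F}
    (hac : a ^ (q + 1) - c ^ (q + 1) = 1)
    (hg : (g : Matrix (Fin 3) (Fin 3) F) = !![a, c ^ q, 0; c, a ^ q, 0; 0, 0, 1])
    (hg2 : g ^ 2 = 1) (hg1 : g ≠ 1) : c ≠ 0 ∧ a ^ q = a := by
  have h2 := congrArg Units.val hg2
  rw [sq, Units.val_mul, hg] at h2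
  have h00 := congrFun (congrFun h2 0) 0
  have h10 := congrFun (congrFun h2 1) 0
  simp [Matrix.mul_apply, Fin.sum_univ_three] at h00 h10
  have hc : c ≠ 0 := by
    rintro rfl
    have ha : a = 1 := eq_one_of_sq (by simpa [hq, sq] using h00)
    apply hg1
    apply Units.ext
    rw [hg, ha]
    ext i j
    fin_cases i <;> fin_cases j <;> simp [hq]
  refine ⟨hc, ?_⟩
  have h3 : c * (a + a ^ q) = 0 := by linear_combination h10
  have h4 := (mul_eq_zero.mp h3).resolve_left hc
  exact (CharTwo.add_eq_zero.mp h4).symm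

/-! ### Fixed points of products -/

/-- Fixed points at infinity of `g = [a, c, 1]` when `g ^ d` lies in a subgroup `U` of exponent
dividing two, with `d` odd and dividing `q - 1`. -/
lemma card_line {F : Type*} [Field F] [Fintype F] [CharP F 2] {q d : ℕ} (hq2 : 2 ≤ q)
    (hF : Fintype.card F = q ^ 2) (hadd : ∀ x y : F, (x + y) ^ q = x ^ q + y ^ q)
    (hqq : ∀ x : F, (x ^ q) ^ q = x) (hd : d ∣ q - 1) (hodd : Odd d)
    {U : Subgroup (GL (Fin 3) F)} [DecidablePred (· ∈ U)] [DecidableEq (GL (Fin 3) F)]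
    (hU : ∀ g ∈ U, g ^ 2 = 1)
    {g : GL (Fin 3) F} (hgU : g ^ d ∈ U) {a c : F} (hac : a ^ (q + 1) - c ^ (q + 1) = 1)
    (hg : (g : Matrix (Fin 3) (Fin 3) F) = !![a, c ^ q, 0; c, a ^ q, 0; 0, 0, 1]) :
    Nat.card {x : F // x ^ (q + 1) = 1 ∧ a * x + c ^ q = (c * x + a ^ q) * x}
      = if g = 1 then q + 1 else if g ∈ U then 1 else 2 := by
  split_ifs with h1 hgu
  · have ha : a = 1 := by
      have := congrFun (congrFun hg 0) 0
      simpa [h1] using this.symm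
    have hc : c = 0 := by
      have := congrFun (congrFun hg 1) 0
      simpa [h1] using this.symm
    subst ha hc
    have hq0 : q ≠ 0 := by lia
    refine Eq.trans ?_ (card_pow_eq_one hF)
    simp [hq0]
  · obtain ⟨hc, ha⟩ := trace_of_sq_eq_one (by lia) hac hg (hU g hgu) h1
    exact card_line_involution hq2 hqq hc ha
  · refine card_line_two (d := d) hq2 hF hadd hqq hd hac ?_ ?_
    · intro ha
      -- an involution is equal to its `d`-th power, which lies in `U`
      apply hgu
      have hsq := sq_eq_one_of_trace hac ha hg
      obtain ⟨k, rfl⟩ := hodd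
      rwa [pow_succ, pow_mul, hsq, one_pow, one_mul] at hgU
    · rw [← hg, mul_comm, pow_mul, ← Units.val_pow_eq_pow_val, ← Units.val_pow_eq_pow_val,
        hU _ hgU, Units.val_one]

/-- The fixed points on the Hermitian curve of `g * z`, where `g ∈ M_ℓ` has order prime to `q + 1`
and satisfies `g ^ d ∈ U`, and `z ∈ Z`. At infinity `z` acts trivially; no affine point is fixed
unless `g = z = 1`. -/
lemma card_fixed_mul {F : Type*} [Field F] [Fintype F] [CharP F 2] {q d n : ℕ} (hq2 : 2 ≤ q)
    (hF : Fintype.card F = q ^ 2) (hadd : ∀ x y : F, (x + y) ^ q = x ^ q + y ^ q)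
    (hqq : ∀ x : F, (x ^ q) ^ q = x) (hd : d ∣ q - 1) (hodd : Odd d) (hn : n.Coprime (q + 1))
    {U : Subgroup (GL (Fin 3) F)} [DecidablePred (· ∈ U)] [DecidableEq (GL (Fin 3) F)]
    (hU : ∀ g ∈ U, g ^ 2 = 1)
    {g z : GL (Fin 3) F} (hgU : g ^ d ∈ U) (hgM : g ∈ MlSet q F) (hgn : g ^ n = 1)
    (hz : z ∈ ZSet q F) :
    Nat.card {x : Projectivization F (Fin 3 → F) // x ∈ hermitianPts q F ∧ glAct (g * z) x = x}
      = (if g = 1 then q + 1 else if g ∈ U then 1 else 2)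
        + if g = 1 ∧ z = 1 then q ^ 3 - q else 0 := by
  obtain ⟨a, c, hac, hg⟩ := form_of_pow_eq_one hn hgM hgn
  obtain ⟨ε, hε, hz⟩ := hz
  have hε0 : ε ≠ 0 := by
    rintro rfl
    simp at hε
  have hgz : ((g * z : GL (Fin 3) F) : Matrix (Fin 3) (Fin 3) F)
      = !![ε * a, ε * c ^ q, 0; ε * c, ε * a ^ q, 0; 0, 0, 1] := by
    rw [Units.val_mul, hg, hz]
    ext i j
    fin_cases i <;> fin_cases j <;> simp [mul_comm]
  rw [card_fixed q (g * z) _ _ _ _ hgz, ← card_line hq2 hF hadd hqq hd hodd hU hgU hac hg]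
  congr 1
  · refine Nat.card_congr (Equiv.subtypeEquivRight fun x => and_congr_right fun _ => ?_)
    rw [← mul_right_inj' hε0 (b := a * x + c ^ q)]
    ring_nf
  · split_ifs with h1
    · have ha : a = 1 := by
        have := congrFun (congrFun hg 0) 0
        simpa [h1.1] using this.symm
      have hc : c = 0 := by
        have := congrFun (congrFun hg 1) 0
        simpa [h1.1] using this.symm
      have he : ε = 1 := by
        have := congrFun (congrFun hz 0) 0
        simpa [h1.2] using this.symm
      have hq0 : q ≠ 0 := by lia
      subst ha hc he
      rw [← card_affine hq2 hF hadd hqq]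
      simp [hq0]
    · rw [Nat.card_eq_zero]
      left
      refine ⟨fun p => h1 ?_⟩
      obtain ⟨rfl, rfl, rfl⟩ := affine_fixed hadd hqq hn hac hε
        (by rw [← hg, ← Units.val_pow_eq_pow_val, hgn, Units.val_one]) p.2.1 p.2.2.1 p.2.2.2
      have hq0 : q ≠ 0 := by lia
      constructor
      · apply Units.ext
        rw [hg]
        ext i j
        fin_cases i <;> fin_cases j <;> simp [hq0]
      · apply Units.ext
        rw [hz]
        ext i j
        fin_cases i <;> fin_cases j <;> simp

/-! ### Counting orbits -/

theorem stmt11 (h q f d w : ℕ) (hh : 1 ≤ h) (hq : q = 2 ^ h)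
    (F : Type*) [Field F] [Fintype F] (hF : Fintype.card F = q ^ 2)
    (hf : f ≤ h) (hd : d ∣ Nat.gcd (2 ^ f - 1) (q - 1)) (hw : w ∣ q + 1)
    (L : Subgroup (GL (Fin 3) F)) (hLMl : (L : Set (GL (Fin 3) F)) ⊆ MlSet q F)
    (hZcard : Nat.card ((L : Set (GL (Fin 3) F)) ∩ ZSet q F : Set (GL (Fin 3) F)) = w)
    (H U D : Subgroup (GL (Fin 3) F))
    (hHcard : Nat.card H = 2 ^ f * d)
    (hUH : U ≤ H) (hUnormal : (U.subgroupOf H).Normal)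
    (hUcard : Nat.card U = 2 ^ f) (hUelem : ∀ g ∈ U, g ^ 2 = 1)
    (hDH : D ≤ H) (hDcard : Nat.card D = d) (hDcyc : IsCyclic ↥D)
    (hUD : H = U ⊔ D)
    (hUDtriv : (U : Set (GL (Fin 3) F)) ∩ (D : Set (GL (Fin 3) F)) ⊆ {1})
    (hgen : L = Subgroup.closure
      ((H : Set (GL (Fin 3) F)) ∪ ((L : Set (GL (Fin 3) F)) ∩ ZSet q F)))
    (htriv : (H : Set (GL (Fin 3) F)) ∩ ((L : Set (GL (Fin 3) F)) ∩ ZSet q F) ⊆ {1}) :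
    (numOrbits L (hermitianPts q F) : ℚ)
      = 2 + ((q : ℚ) - 2 ^ f) / (2 ^ f * (d : ℚ))
        + ((q : ℚ) / 2 ^ f) * (((q : ℚ) ^ 2 - 1) / ((d : ℚ) * (w : ℚ))) := by
  classical
  have hq2 : 2 ≤ q := by
    rw [hq]
    calc 2 = 2 ^ 1 := rfl
      _ ≤ 2 ^ h := Nat.pow_le_pow_right (by lia) hh
  have : Fact (Nat.Prime 2) := ⟨Nat.prime_two⟩
  have : CharP F 2 := charP_of_card_eq_prime_pow (f := h * 2) (by rw [hF, hq, pow_mul])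
  have hadd : ∀ x y : F, (x + y) ^ q = x ^ q + y ^ q := by
    intro x y
    rw [hq]
    exact add_pow_char_pow x y 2 h
  have hqq : ∀ x : F, (x ^ q) ^ q = x := by
    intro x
    rw [← pow_mul, ← sq, ← hF]
    exact FiniteField.pow_card x
  have hqeven : Even q := by
    rw [hq]
    exact (even_two).pow_of_ne_zero (by lia)
  have hdq : d ∣ q - 1 := hd.trans (Nat.gcd_dvd_right _ _)
  have hqodd : Odd (q - 1) := Nat.Even.sub_odd (by lia) hqeven odd_one
  have hdodd : Odd d := hqodd.of_dvd_nat hdq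
  have hd0 : 0 < d := hdodd.pos
  have hn : (2 ^ f * d).Coprime (q + 1) := by
    refine Nat.Coprime.mul_left (Nat.Coprime.pow_left _ ?_) (Nat.Coprime.coprime_dvd_left hdq ?_)
    · exact (Nat.coprime_two_left).2 hqeven.add_one
    · have : q + 1 = 2 + (q - 1) := by lia
      rw [this, Nat.coprime_add_self_right]
      exact (Nat.coprime_two_right).2 hqodd
  have hHL : H ≤ L := by
    intro g hg
    rw [hgen]
    exact Subgroup.subset_closure (Or.inl hg)
  -- elements of `H` have order dividing `|H|`, and their `d`-th powers lie in `U`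
  have hHpow : ∀ g ∈ H, g ^ (2 ^ f * d) = 1 := by
    intro g hg
    have := pow_card_eq_one' (x := (⟨g, hg⟩ : H))
    rw [hHcard] at this
    exact congrArg Subtype.val this
  have hindex : (U.subgroupOf H).index = d := by
    have h1 := Subgroup.card_mul_index (U.subgroupOf H)
    rw [Nat.card_congr (Subgroup.subgroupOfEquivOfLe hUH).toEquiv, hUcard, hHcard] at h1
    exact Nat.eq_of_mul_eq_mul_left (by positivity) h1
  have hHU : ∀ g ∈ H, g ^ d ∈ U := by
    intro g hg
    have h1 := Subgroup.pow_index_mem (U.subgroupOf H) ⟨g, hg⟩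
    rw [hindex] at h1
    exact h1
  let W : Subgroup (GL (Fin 3) F) := L ⊓ ZSub q F
  have hWcard : Nat.card W = w := hZcard
  have hw0 : 0 < w := by
    rw [← hWcard]
    exact Nat.card_pos
  -- `L` is the internal direct product of `H` and `W`
  have hcomm : ∀ (x : H) (z : W), Commute (H.subtype x) (W.subtype z) :=
    fun x z => commute_of_mem (hLMl (hHL x.2)) z.2.2
  have hLrange : L = (MonoidHom.noncommCoprod H.subtype W.subtype hcomm).range := by
    rw [MonoidHom.noncommCoprod_range, Subgroup.range_subtype, Subgroup.range_subtype]
    have h1 : Subgroup.closure ((H : Set (GL (Fin 3) F)) ∪ (W : Set (GL (Fin 3) F))) = H ⊔ W := by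
      rw [Subgroup.closure_union, Subgroup.closure_eq, Subgroup.closure_eq]
    rw [← h1]
    exact hgen
  have hinj : Function.Injective (MonoidHom.noncommCoprod H.subtype W.subtype hcomm) := by
    rw [MonoidHom.noncommCoprod_injective]
    refine ⟨Subtype.val_injective, Subtype.val_injective, ?_⟩
    rw [Subgroup.range_subtype, Subgroup.range_subtype, Subgroup.disjoint_def]
    exact fun hx hx' => htriv ⟨hx, hx'⟩
  let ψ : H × W → L := fun p => ⟨p.1.1 * p.2.1, L.mul_mem (hHL p.1.2) p.2.2.1⟩
  have hψ : Function.Bijective ψ := by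
    constructor
    · intro p r hpr
      exact hinj (congrArg Subtype.val hpr)
    · rintro ⟨g, hg⟩
      rw [hLrange] at hg
      obtain ⟨p, hp⟩ := hg
      exact ⟨p, Subtype.ext hp⟩
  have hLcard : Nat.card L = 2 ^ f * d * w := by
    rw [← Nat.card_congr (Equiv.ofBijective ψ hψ), Nat.card_prod, hHcard, hWcard]
  have hB := burnside L (hermitianPts q F)
    (fun g hg x hx => mapsTo_hermitianPts hadd hqq (hLMl hg) hx)
  rw [← hψ.sum_comp, hLcard] at hB
  have hfix : ∀ p : H × W, Nat.card {x : Projectivization F (Fin 3 → F) //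
      x ∈ hermitianPts q F ∧ glAct (ψ p).1 x = x}
      = (if p.1 = 1 then q + 1 else if p.1.1 ∈ U then 1 else 2)
        + if p.1 = 1 ∧ p.2 = 1 then q ^ 3 - q else 0 := by
    intro p
    have h1 := card_fixed_mul hq2 hF hadd hqq hdq hdodd hn hUelem (hHU _ p.1.2)
      (hLMl (hHL p.1.2)) (hHpow _ p.1.2) p.2.2.2
    simpa only [OneMemClass.coe_eq_one] using h1
  rw [Finset.sum_congr rfl fun p _ => hfix p, Finset.sum_add_distrib, Fintype.sum_prod_type] at hB
  have hq3 : q ≤ q ^ 3 := Nat.le_self_pow (by lia) q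
  have hsum2 : ∑ p : H × W, (if p.1 = 1 ∧ p.2 = 1 then q ^ 3 - q else 0) = q ^ 3 - q := by
    have : ∀ p : H × W, (p.1 = 1 ∧ p.2 = 1) ↔ p = 1 := by
      intro p
      rw [Prod.ext_iff]
      rfl
    simp [this]
  have hsum1 : ∑ x : H, (((if x = 1 then q + 1 else if x.1 ∈ U then 1 else 2 : ℕ)) : ℚ)
      = 2 * (2 ^ f * d) - 2 ^ f + q := by
    have h1 : ∀ x : H, (((if x = 1 then q + 1 else if x.1 ∈ U then 1 else 2 : ℕ)) : ℚ)
        = 2 - (if x.1 ∈ U then 1 else 0) + (if x = 1 then (q : ℚ) else 0) := by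
      intro x
      by_cases hx : x = 1
      · subst hx
        simp [U.one_mem]
        ring
      · by_cases hxU : x.1 ∈ U
        · simp [hx, hxU]
          norm_num
        · simp [hx, hxU]
    have h2 : (Finset.univ.filter fun x : H => x.1 ∈ U).card = 2 ^ f := by
      rw [← hUcard, ← Nat.card_congr (Subgroup.subgroupOfEquivOfLe hUH).toEquiv,
        Nat.card_eq_fintype_card, Fintype.card_subtype]
      rfl
    rw [Finset.sum_congr rfl fun x _ => h1 x, Finset.sum_add_distrib, Finset.sum_sub_distrib,
      Finset.sum_const, Finset.card_univ, ← Nat.card_eq_fintype_card, hHcard, Finset.sum_boole, h2]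
    simp
    ring
  rw [hsum2] at hB
  have hB' : ∑ x : H, ∑ _z : W, (if x = 1 then q + 1 else if x.1 ∈ U then 1 else 2)
      + (q ^ 3 - q) = numOrbits L (hermitianPts q F) * (2 ^ f * d * w) := hB
  simp only [Finset.sum_const, Finset.card_univ, ← Nat.card_eq_fintype_card, hWcard,
    smul_eq_mul, ← Finset.mul_sum] at hB'
  have hBQ := congrArg (Nat.cast : ℕ → ℚ) hB'
  rw [Nat.cast_add, Nat.cast_mul, Nat.cast_sum, hsum1, Nat.cast_sub hq3] at hBQ
  push_cast at hBQ
  have hdQ : (d : ℚ) ≠ 0 := by positivity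
  have hwQ : (w : ℚ) ≠ 0 := by positivity
  field_simp
  linear_combination -hBQ
end

section
/- Let T = {P, P₁, P₂} be a self-polar triangle containing the point P = (0:0:1). Let L̄ ≤ M_ℓ be a subgroup mapping T to itself such that the pointwise stabilizer L̄_T of T in L̄ has index 2 in L̄. Set w := |L̄ ∩ Z| and suppose |L̄| = 2tw. Then the quotient L̄/(L̄ ∩ Z) is isomorphic to the dihedral group of order 2t. -/
/-!
Choose representatives `v₁, v₂` of `P₁, P₂`; orthogonality to `P = (0:0:1)` puts them in the plane
`z = 0`, of which they form a basis. Every `g ∈ L` fixes `P`, hence either fixes both `P₁, P₂`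
(`g v₁ = α v₁`, `g v₂ = β v₂`) or swaps them (`g v₁ = α v₂`, `g v₂ = β v₁`). In either case put
`ρ g = α / β`. On the index-two subgroup of elements of the first kind `ρ` is a homomorphism into
the cyclic group `Fˣ` whose kernel is `L ∩ Z`, so its image is cyclic of order `t`.
Fixing a swapping element `s` and writing `log` for an isomorphism of that image with `ℤ/t`, the map
`g ↦ r (log (ρ g))` for fixing elements and `g ↦ sr (log (ρ g / ρ s))` for swapping ones is the
required homomorphism: the rules for `ρ` of a product (`DihedralLike`) are exactly the
multiplication rules of the dihedral group. The group-theoretic part is `exists_hom_dihedral`.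
-/

open Matrix

def hermForm (q : ℕ) {F : Type*} [Field F] (u v : Fin 3 → F) : F :=
  -(u 0 ^ q) * v 0 + u 1 ^ q * v 1 + u 2 ^ q * v 2

/-! ### Groups with dihedral multiplication rules -/

/-- The predicate `D` (the "rotations") and the `U`-valued ratio `ρ` on `G` obey the multiplication
rules of a generalized dihedral group. -/
structure DihedralLike {G U : Type*} [Group G] [CommGroup U] (D : G → Prop) (ρ : G → U) : Prop where
  rr : ∀ x y, D x → D y → D (x * y) ∧ ρ (x * y) = ρ x * ρ y
  rs : ∀ x y, D x → ¬ D y → ¬ D (x * y) ∧ ρ (x * y) = ρ y / ρ x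
  sr : ∀ x y, ¬ D x → D y → ¬ D (x * y) ∧ ρ (x * y) = ρ x * ρ y
  ss : ∀ x y, ¬ D x → ¬ D y → D (x * y) ∧ ρ (x * y) = ρ y / ρ x

namespace DihedralLike

variable {G U : Type*} [Group G] [CommGroup U] {D : G → Prop} {ρ : G → U}

lemma one (H : DihedralLike D ρ) : D 1 := by
  by_contra h
  have := (H.ss 1 1 h h).1
  rw [mul_one] at this
  exact h this

lemma inv (H : DihedralLike D ρ) {x : G} (hx : D x) : D x⁻¹ := by
  by_contra h
  have := (H.rs x x⁻¹ hx h).1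
  rw [mul_inv_cancel] at this
  exact this H.one

/-- The subgroup of rotations. -/
def rot (H : DihedralLike D ρ) : Subgroup G where
  carrier := {x | D x}
  mul_mem' {x y} hx hy := (H.rr x y hx hy).1
  one_mem' := H.one
  inv_mem' := H.inv

/-- The ratio is multiplicative on rotations. -/
def ratioHom (H : DihedralLike D ρ) : H.rot →* U :=
  MonoidHom.mk' (fun x => ρ x) (fun x y => (H.rr x y x.2 y.2).2)

lemma ratio_mem_range (H : DihedralLike D ρ) {x : G} (hx : D x) : ρ x ∈ H.ratioHom.range :=
  ⟨⟨x, hx⟩, rfl⟩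

lemma ratio_div_mem_range (H : DihedralLike D ρ) {s x : G} (hs : ¬ D s) (hx : ¬ D x) :
    ρ x / ρ s ∈ H.ratioHom.range := by
  have hD : D (s⁻¹ * x) := by
    by_contra h
    have := (H.ss s (s⁻¹ * x) hs h).1
    rw [mul_inv_cancel_left] at this
    exact hx this
  have h2 := (H.sr s (s⁻¹ * x) hs hD).2
  rw [mul_inv_cancel_left] at h2
  rw [h2, mul_div_cancel_left]
  exact H.ratio_mem_range hD

lemma index_rot (H : DihedralLike D ρ) {s : G} (hs : ¬ D s) : H.rot.index = 2 := by
  rw [Subgroup.index_eq_two_iff]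
  refine ⟨s, fun b => ?_⟩
  by_cases hb : D b
  · exact Or.inr ⟨hb, (H.rs b s hb hs).1⟩
  · exact Or.inl ⟨(H.ss b s hb hs).1, hb⟩

/-- The image of the rotations under the ratio has order `t` if `G` has order `2 * t * w` with `w`
the order of the kernel. -/
lemma card_range [Finite G] (H : DihedralLike D ρ) {s : G} (hs : ¬ D s) {t w : ℕ}
    (hw : Nat.card {x : G // D x ∧ ρ x = 1} = w) (hG : Nat.card G = 2 * t * w) :
    Nat.card H.ratioHom.range = t := by
  have h1 := H.rot.card_mul_index
  rw [H.index_rot hs, hG] at h1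
  have h2 := H.ratioHom.ker.card_mul_index
  rw [Subgroup.index_ker] at h2
  have h3 : Nat.card H.ratioHom.ker = w := by
    rw [← hw]
    exact Nat.card_congr
      { toFun := fun x => ⟨x.1.1, x.1.2, x.2⟩
        invFun := fun x => ⟨⟨x.1, x.2.1⟩, x.2.2⟩
        left_inv := fun _ => rfl
        right_inv := fun _ => rfl }
  have hwpos : 0 < w := h3 ▸ Nat.card_pos
  rw [h3] at h2
  have : w * Nat.card H.ratioHom.range = w * t := by
    rw [h2]; linarith
  exact Nat.eq_of_mul_eq_mul_left hwpos this

/-- A finite group with dihedral-like multiplication rules whose ratios lie in a group all of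
whose subgroups are cyclic surjects onto a dihedral group, with kernel the rotations of ratio one. -/
theorem exists_hom_dihedral [Finite G] (H : DihedralLike D ρ) [∀ A : Subgroup U, IsCyclic A]
    {s : G} (hs : ¬ D s) {t w : ℕ}
    (hw : Nat.card {x : G // D x ∧ ρ x = 1} = w) (hG : Nat.card G = 2 * t * w) :
    ∃ φ : G →* DihedralGroup t, Function.Surjective φ ∧ ∀ x, φ x = 1 ↔ D x ∧ ρ x = 1 := by
  classical
  have hc : Nat.card H.ratioHom.range = Nat.card (Multiplicative (ZMod t)) := by
    rw [H.card_range hs hw hG]; exact (Nat.card_zmod t).symm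
  obtain ⟨e⟩ : Nonempty (H.ratioHom.range ≃* Multiplicative (ZMod t)) :=
    ⟨mulEquivOfCyclicCardEq hc⟩
  let f : G → DihedralGroup t := fun x =>
    if hx : D x then .r (e ⟨ρ x, H.ratio_mem_range hx⟩).toAdd
    else .sr (e ⟨ρ x / ρ s, H.ratio_div_mem_range hs hx⟩).toAdd
  have fr : ∀ x (hx : D x), f x = .r (e ⟨ρ x, H.ratio_mem_range hx⟩).toAdd :=
    fun x hx => dif_pos hx
  have fs : ∀ x (hx : ¬ D x), f x = .sr (e ⟨ρ x / ρ s, H.ratio_div_mem_range hs hx⟩).toAdd :=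
    fun x hx => dif_neg hx
  have fmul : ∀ x y, f (x * y) = f x * f y := by
    intro x y
    by_cases hx : D x <;> by_cases hy : D y
    · obtain ⟨h1, h2⟩ := H.rr x y hx hy
      rw [fr _ h1, fr _ hx, fr _ hy, DihedralGroup.r_mul_r, ← toAdd_mul, ← map_mul]
      congr 3
      exact Subtype.ext h2
    · obtain ⟨h1, h2⟩ := H.rs x y hx hy
      rw [fs _ h1, fr _ hx, fs _ hy, DihedralGroup.r_mul_sr, ← toAdd_div, ← map_div]
      congr 3
      exact Subtype.ext (by simp only [h2, Subgroup.coe_div, div_right_comm])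
    · obtain ⟨h1, h2⟩ := H.sr x y hx hy
      rw [fs _ h1, fs _ hx, fr _ hy, DihedralGroup.sr_mul_r, ← toAdd_mul, ← map_mul]
      congr 3
      exact Subtype.ext (by simp only [h2, Subgroup.coe_mul, mul_div_right_comm])
    · obtain ⟨h1, h2⟩ := H.ss x y hx hy
      rw [fr _ h1, fs _ hx, fs _ hy, DihedralGroup.sr_mul_sr, ← toAdd_div, ← map_div]
      congr 3
      exact Subtype.ext (by simp only [h2, Subgroup.coe_div, div_div_div_cancel_right])
  refine ⟨MonoidHom.mk' f fmul, ?_, ?_⟩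
  · have surjr : ∀ i : ZMod t, ∃ x, D x ∧ f x = .r i := by
      intro i
      obtain ⟨⟨u, ⟨x, hx⟩, hxu⟩, hu⟩ := e.surjective (Multiplicative.ofAdd i)
      refine ⟨x, hx, ?_⟩
      rw [fr x hx]
      subst hxu
      exact congrArg DihedralGroup.r (congrArg Multiplicative.toAdd hu)
    rintro (i | i)
    · obtain ⟨x, -, hx⟩ := surjr i
      exact ⟨x, hx⟩
    · have hfs : f s = .sr 0 := by
        rw [fs s hs]
        have : (⟨ρ s / ρ s, H.ratio_div_mem_range hs hs⟩ : H.ratioHom.range) = 1 :=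
          Subtype.ext (div_self' _)
        rw [this, map_one]; rfl
      obtain ⟨x, -, hx⟩ := surjr i
      refine ⟨s * x, ?_⟩
      change f (s * x) = _
      rw [fmul, hfs, hx, DihedralGroup.sr_mul_r, zero_add]
  · intro x
    change f x = 1 ↔ _
    rw [DihedralGroup.one_def]
    by_cases hx : D x
    · rw [fr x hx]
      simp only [DihedralGroup.r.injEq, hx, true_and, toAdd_eq_zero, EmbeddingLike.map_eq_one_iff]
      exact Subtype.ext_iff
    · rw [fs x hx]
      exact iff_of_false (fun h => by cases h) fun h => hx h.1

end DihedralLike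

/-! ### The action on the triangle -/

section Geometry

variable {F : Type*} [Field F]

lemma glAct_eq_iff (g : GL (Fin 3) F) (x y : Projectivization F (Fin 3 → F)) :
    glAct g x = y ↔ ∃ a : Fˣ, (g : Matrix (Fin 3) (Fin 3) F) *ᵥ x.rep = a • y.rep := by
  conv_lhs => rw [← x.mk_rep, ← y.mk_rep]
  unfold glAct
  rw [Projectivization.map_mk, Projectivization.mk_eq_mk_iff]
  exact exists_congr fun a => eq_comm

/-- Two distinct points of the line `z = 0` have representatives that are independent in the first
two coordinates. -/
lemma det_ne_zero_of_ne {x y : Projectivization F (Fin 3 → F)} (hxy : x ≠ y)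
    (hx : x.rep 2 = 0) (hy : y.rep 2 = 0) :
    x.rep 0 * y.rep 1 - x.rep 1 * y.rep 0 ≠ 0 := by
  intro hd
  apply hxy
  rw [← x.mk_rep, ← y.mk_rep, Projectivization.mk_eq_mk_iff']
  have hy0 := y.rep_nonzero
  by_cases h0 : y.rep 0 = 0
  · have h1 : y.rep 1 ≠ 0 := by
      intro h1
      exact hy0 (by ext i; fin_cases i <;> simp [h0, h1, hy])
    refine ⟨x.rep 1 / y.rep 1, ?_⟩
    have h00 : x.rep 0 = 0 := by
      rw [h0] at hd
      simpa [h1] using hd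
    ext i; fin_cases i <;> simp [h0, h1, hx, hy, h00]
  · refine ⟨x.rep 0 / y.rep 0, ?_⟩
    ext i; fin_cases i
    · simp [h0]
    · simp; field_simp; linear_combination hd
    · simp [hx, hy]

/-- An element of `M_ℓ` acting on two independent vectors of the plane `z = 0` by the same scalar
lies in `Z`. -/
lemma mem_ZSet_of_scalar {q : ℕ} {g : GL (Fin 3) F} (hg : g ∈ MlSet q F) (hq : q ≠ 0)
    {v₁ v₂ : Fin 3 → F} (hd : v₁ 0 * v₂ 1 - v₁ 1 * v₂ 0 ≠ 0) (h₁ : v₁ 2 = 0) (h₂ : v₂ 2 = 0)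
    {a : F} (e₁ : (g : Matrix (Fin 3) (Fin 3) F) *ᵥ v₁ = a • v₁)
    (e₂ : (g : Matrix (Fin 3) (Fin 3) F) *ᵥ v₂ = a • v₂) : g ∈ ZSet q F := by
  obtain ⟨b, c, τ, hbc, hτ, hM⟩ := hg
  rw [hM] at e₁ e₂
  have e10 := congrFun e₁ 0
  have e11 := congrFun e₁ 1
  have e20 := congrFun e₂ 0
  have e21 := congrFun e₂ 1
  simp [Matrix.mulVec, dotProduct, Fin.sum_univ_three, h₁, h₂] at e10 e11 e20 e21
  have hb : b = a := by
    apply sub_eq_zero.mp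
    apply (mul_eq_zero.mp _).resolve_right hd
    linear_combination v₂ 1 * e10 - v₁ 1 * e20
  have hc : c = 0 := by
    apply (mul_eq_zero.mp _).resolve_right hd
    linear_combination v₂ 1 * e11 - v₁ 1 * e21
  have hz : τ * b ^ q = a := by
    apply sub_eq_zero.mp
    apply (mul_eq_zero.mp _).resolve_right hd
    linear_combination v₁ 0 * e21 - v₂ 0 * e11
  subst hc
  refine ⟨b, by simpa using hbc, ?_⟩
  rw [hM, hz, hb]
  ext i j
  fin_cases i <;> fin_cases j <;> simp [hq]

/-- Elements of `Z` act on the plane `z = 0` by a nonzero scalar. -/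
lemma mulVec_of_mem_ZSet {q : ℕ} {g : GL (Fin 3) F} (hg : g ∈ ZSet q F) :
    ∃ a : Fˣ, ∀ v : Fin 3 → F, v 2 = 0 → (g : Matrix (Fin 3) (Fin 3) F) *ᵥ v = a • v := by
  obtain ⟨a, ha, hM⟩ := hg
  have ha0 : a ≠ 0 := by
    rintro rfl
    simp at ha
  refine ⟨Units.mk0 a ha0, fun v hv => ?_⟩
  rw [hM]
  ext i
  fin_cases i <;> simp [Matrix.mulVec_diagonal, hv, Units.smul_def]

/-- Elements of `M_ℓ` fix every vector on the `z`-axis; in particular they fix `(0:0:1)`. -/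
lemma mulVec_of_mem_MlSet {q : ℕ} {g : GL (Fin 3) F} (hg : g ∈ MlSet q F) {p : Fin 3 → F}
    (h0 : p 0 = 0) (h1 : p 1 = 0) : (g : Matrix (Fin 3) (Fin 3) F) *ᵥ p = p := by
  obtain ⟨b, c, τ, hbc, hτ, hM⟩ := hg
  rw [hM]
  ext i
  fin_cases i <;> simp [Matrix.mulVec, dotProduct, Fin.sum_univ_three, h0, h1]

lemma glAct_injective (g : GL (Fin 3) F) : Function.Injective (glAct g) :=
  Projectivization.map_injective _
    (LinearMap.GeneralLinearGroup.generalLinearEquiv F (Fin 3 → F)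
      (Matrix.GeneralLinearGroup.toLin g)).injective

/-- A group each of whose elements fixes or swaps two given lines `⟨v₁⟩`, `⟨v₂⟩` is dihedral-like
with respect to the quotient `α / β` of the two scalars that occur. -/
lemma dihedralLike_of_monomial (L : Subgroup (GL (Fin 3) F)) {v₁ v₂ : Fin 3 → F}
    (hv₁ : v₁ ≠ 0) (hv₂ : v₂ ≠ 0) {D : L → Prop} {α β : L → Fˣ}
    (hsep : ∀ a b : Fˣ, a • v₁ ≠ b • v₂)
    (hD : ∀ g : L, D g → (g.1 : Matrix (Fin 3) (Fin 3) F) *ᵥ v₁ = α g • v₁ ∧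
      (g.1 : Matrix (Fin 3) (Fin 3) F) *ᵥ v₂ = β g • v₂)
    (hS : ∀ g : L, ¬ D g → (g.1 : Matrix (Fin 3) (Fin 3) F) *ᵥ v₁ = α g • v₂ ∧
      (g.1 : Matrix (Fin 3) (Fin 3) F) *ᵥ v₂ = β g • v₁) :
    DihedralLike D (fun g => α g / β g) := by
  have inj : ∀ {v : Fin 3 → F}, v ≠ 0 → ∀ {a b : Fˣ}, a • v = b • v → a = b := by
    intro v hv a b hab
    exact Units.ext (smul_left_injective F hv hab)
  have comp : ∀ (x y : L) {u v w : Fin 3 → F} {a b : Fˣ},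
      (y.1 : Matrix (Fin 3) (Fin 3) F) *ᵥ u = a • v → (x.1 : Matrix (Fin 3) (Fin 3) F) *ᵥ v = b • w →
      ((x * y : L).1 : Matrix (Fin 3) (Fin 3) F) *ᵥ u = (a * b) • w := by
    intro x y u v w a b h1 h2
    rw [Subgroup.coe_mul, Units.val_mul, ← Matrix.mulVec_mulVec, h1, Matrix.mulVec_smul, h2,
      smul_smul]
  -- the kind of an element and its two scalars are determined by the images of `v₁` and `v₂`
  have isD : ∀ (x : L) {a b : Fˣ}, (x.1 : Matrix (Fin 3) (Fin 3) F) *ᵥ v₁ = a • v₁ →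
      (x.1 : Matrix (Fin 3) (Fin 3) F) *ᵥ v₂ = b • v₂ → D x ∧ α x = a ∧ β x = b := by
    intro x a b h1 h2
    have hx : D x := by
      by_contra hx
      exact hsep _ _ (h1.symm.trans (hS x hx).1)
    exact ⟨hx, inj hv₁ ((hD x hx).1.symm.trans h1), inj hv₂ ((hD x hx).2.symm.trans h2)⟩
  have isS : ∀ (x : L) {a b : Fˣ}, (x.1 : Matrix (Fin 3) (Fin 3) F) *ᵥ v₁ = a • v₂ →
      (x.1 : Matrix (Fin 3) (Fin 3) F) *ᵥ v₂ = b • v₁ → ¬ D x ∧ α x = a ∧ β x = b := by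
    intro x a b h1 h2
    have hx : ¬ D x := by
      intro hx
      exact hsep _ _ ((hD x hx).1.symm.trans h1)
    exact ⟨hx, inj hv₂ ((hS x hx).1.symm.trans h1), inj hv₁ ((hS x hx).2.symm.trans h2)⟩
  constructor
  · intro x y hx hy
    obtain ⟨h, h1, h2⟩ := isD (x * y) (comp x y (hD y hy).1 (hD x hx).1)
      (comp x y (hD y hy).2 (hD x hx).2)
    refine ⟨h, ?_⟩
    simp only [h1, h2]
    rw [mul_div_mul_comm, mul_comm]
  · intro x y hx hy
    obtain ⟨h, h1, h2⟩ := isS (x * y) (comp x y (hS y hy).1 (hD x hx).2)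
      (comp x y (hS y hy).2 (hD x hx).1)
    refine ⟨h, ?_⟩
    simp only [h1, h2]
    rw [mul_div_mul_comm, div_div_eq_mul_div, mul_div_assoc]
  · intro x y hx hy
    obtain ⟨h, h1, h2⟩ := isS (x * y) (comp x y (hD y hy).1 (hS x hx).1)
      (comp x y (hD y hy).2 (hS x hx).2)
    refine ⟨h, ?_⟩
    simp only [h1, h2]
    rw [mul_div_mul_comm, mul_comm]
  · intro x y hx hy
    obtain ⟨h, h1, h2⟩ := isD (x * y) (comp x y (hS y hy).1 (hS x hx).2)
      (comp x y (hS y hy).2 (hS x hx).1)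
    refine ⟨h, ?_⟩
    simp only [h1, h2]
    rw [mul_div_mul_comm, div_div_eq_mul_div, mul_div_assoc]

end Geometry

theorem stmt12 (h q t w : ℕ) (hh : 1 ≤ h) (hq : q = 2 ^ h)
    (F : Type*) [Field F] [Fintype F] (hF : Fintype.card F = q ^ 2)
    (P P₁ P₂ : Projectivization F (Fin 3 → F))
    (hP : P = Projectivization.mk F (![0, 0, 1] : Fin 3 → F)
      (by intro hcon; have h2 := congrFun hcon 2; simp at h2))
    (hne01 : P ≠ P₁) (hne02 : P ≠ P₂) (hne12 : P₁ ≠ P₂)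
    (hselfpolar : (∀ x ∈ ({P, P₁, P₂} : Set (Projectivization F (Fin 3 → F))),
        hermForm q x.rep x.rep ≠ 0) ∧
      (∀ x ∈ ({P, P₁, P₂} : Set (Projectivization F (Fin 3 → F))),
        ∀ y ∈ ({P, P₁, P₂} : Set (Projectivization F (Fin 3 → F))),
          x ≠ y → hermForm q x.rep y.rep = 0))
    (L : Subgroup (GL (Fin 3) F)) (hLMl : (L : Set (GL (Fin 3) F)) ⊆ MlSet q F)
    (hstab : ∀ g ∈ L, ∀ x ∈ ({P, P₁, P₂} : Set (Projectivization F (Fin 3 → F))),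
      glAct g x ∈ ({P, P₁, P₂} : Set (Projectivization F (Fin 3 → F))))
    (hindex2 : Nat.card ↥L = 2 * Nat.card
      {g : GL (Fin 3) F | g ∈ L ∧
        ∀ x ∈ ({P, P₁, P₂} : Set (Projectivization F (Fin 3 → F))), glAct g x = x})
    (hZcard : Nat.card ((L : Set (GL (Fin 3) F)) ∩ ZSet q F : Set (GL (Fin 3) F)) = w)
    (hLcard : Nat.card ↥L = 2 * t * w) :
    ∃ φ : ↥L →* DihedralGroup t, Function.Surjective φ ∧
      ∀ x : ↥L, φ x = 1 ↔ (x : GL (Fin 3) F) ∈ ZSet q F := by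
  classical
  have hq0 : q ≠ 0 := by
    rw [hq]
    positivity
  -- coordinates of the representatives
  obtain ⟨a, ha⟩ : ∃ a : Fˣ, a • (![0, 0, 1] : Fin 3 → F) = P.rep := by
    have h1 := P.mk_rep.trans hP
    rwa [Projectivization.mk_eq_mk_iff] at h1
  have p0 : P.rep 0 = 0 := by rw [← ha]; simp
  have p1 : P.rep 1 = 0 := by rw [← ha]; simp
  have p2 : P.rep 2 ≠ 0 := by rw [← ha]; simp [Units.smul_def]
  have plane : ∀ x ∈ ({P, P₁, P₂} : Set (Projectivization F (Fin 3 → F))), P ≠ x →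
      x.rep 2 = 0 := by
    intro x hx hne
    have h1 := hselfpolar.2 P (by simp) x hx hne
    simpa [hermForm, p0, p1, hq0, p2] using h1
  have z1 := plane P₁ (by simp) hne01
  have z2 := plane P₂ (by simp) hne02
  have hdet := det_ne_zero_of_ne hne12 z1 z2
  have fixP : ∀ g ∈ L, glAct g P = P := fun g hg =>
    (glAct_eq_iff g P P).2 ⟨1, by rw [mulVec_of_mem_MlSet (hLMl hg) p0 p1, one_smul]⟩
  -- the image of `P₁` or `P₂` is never `P`, since `P` is fixed
  have image : ∀ g ∈ L, ∀ x ∈ ({P, P₁, P₂} : Set (Projectivization F (Fin 3 → F))), P ≠ x →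
      glAct g x = P₁ ∨ glAct g x = P₂ := by
    intro g hg x hx hne
    rcases hstab g hg x hx with h1 | h1 | h1
    · exact absurd (glAct_injective g (h1.trans (fixP g hg).symm)).symm hne
    · exact Or.inl h1
    · exact Or.inr h1
  let D : L → Prop := fun g => glAct g.1 P₁ = P₁
  have fix2 : ∀ g : L, D g → glAct g.1 P₂ = P₂ := by
    intro g hg
    refine (image g g.2 P₂ (by simp) hne02).resolve_left fun h1 => ?_
    exact hne12 (glAct_injective g.1 (Eq.trans hg h1.symm))
  have swap1 : ∀ g : L, ¬ D g → glAct g.1 P₁ = P₂ := fun g hg =>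
    (image g g.2 P₁ (by simp) hne01).resolve_left hg
  have swap2 : ∀ g : L, ¬ D g → glAct g.1 P₂ = P₁ := by
    intro g hg
    refine (image g g.2 P₂ (by simp) hne02).resolve_right fun h1 => ?_
    exact hne12 (glAct_injective g.1 ((swap1 g hg).trans h1.symm))
  have scal1 : ∀ g : L, ∃ a : Fˣ,
      (g.1 : Matrix (Fin 3) (Fin 3) F) *ᵥ P₁.rep = a • (if D g then P₁.rep else P₂.rep) := by
    intro g
    by_cases hg : D g
    · simpa only [if_pos hg] using (glAct_eq_iff _ _ _).1 hg
    · simpa only [if_neg hg] using (glAct_eq_iff _ _ _).1 (swap1 g hg)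
  have scal2 : ∀ g : L, ∃ a : Fˣ,
      (g.1 : Matrix (Fin 3) (Fin 3) F) *ᵥ P₂.rep = a • (if D g then P₂.rep else P₁.rep) := by
    intro g
    by_cases hg : D g
    · simpa only [if_pos hg] using (glAct_eq_iff _ _ _).1 (fix2 g hg)
    · simpa only [if_neg hg] using (glAct_eq_iff _ _ _).1 (swap2 g hg)
  choose α hα using scal1
  choose β hβ using scal2
  have hD : ∀ g : L, D g → (g.1 : Matrix (Fin 3) (Fin 3) F) *ᵥ P₁.rep = α g • P₁.rep ∧
      (g.1 : Matrix (Fin 3) (Fin 3) F) *ᵥ P₂.rep = β g • P₂.rep := fun g hg =>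
    ⟨by rw [hα g, if_pos hg], by rw [hβ g, if_pos hg]⟩
  have hS : ∀ g : L, ¬ D g → (g.1 : Matrix (Fin 3) (Fin 3) F) *ᵥ P₁.rep = α g • P₂.rep ∧
      (g.1 : Matrix (Fin 3) (Fin 3) F) *ᵥ P₂.rep = β g • P₁.rep := fun g hg =>
    ⟨by rw [hα g, if_neg hg], by rw [hβ g, if_neg hg]⟩
  have hsep : ∀ a b : Fˣ, a • P₁.rep ≠ b • P₂.rep := by
    intro a b hab
    apply hne12
    rw [← P₁.mk_rep, ← P₂.mk_rep, Projectivization.mk_eq_mk_iff]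
    exact ⟨a⁻¹ * b, by rw [mul_smul, ← hab, inv_smul_smul]⟩
  have H := dihedralLike_of_monomial L P₁.rep_nonzero P₂.rep_nonzero hsep hD hS
  have hker : ∀ g : L, (D g ∧ α g / β g = 1) ↔ (g : GL (Fin 3) F) ∈ ZSet q F := by
    intro g
    constructor
    · rintro ⟨hg, h1⟩
      obtain ⟨e1, e2⟩ := hD g hg
      rw [← div_eq_one.mp h1] at e2
      exact mem_ZSet_of_scalar (hLMl g.2) hq0 hdet z1 z2 (a := (α g : F)) e1 e2
    · intro hg
      obtain ⟨a, ha⟩ := mulVec_of_mem_ZSet hg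
      have hDg : D g := (glAct_eq_iff _ _ _).2 ⟨a, ha _ z1⟩
      have h1 : α g = a := Units.ext (smul_left_injective F P₁.rep_nonzero
        ((hD g hDg).1.symm.trans (ha _ z1)))
      have h2 : β g = a := Units.ext (smul_left_injective F P₂.rep_nonzero
        ((hD g hDg).2.symm.trans (ha _ z2)))
      exact ⟨hDg, by rw [h1, h2, div_self']⟩
  -- the index-two hypothesis rules out that all of `L` fixes the triangle pointwise
  obtain ⟨s, hs⟩ : ∃ s : L, ¬ D s := by
    by_contra! hall
    have hset : {g : GL (Fin 3) F | g ∈ L ∧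
        ∀ x ∈ ({P, P₁, P₂} : Set (Projectivization F (Fin 3 → F))), glAct g x = x} = L := by
      ext g
      refine ⟨fun hg => hg.1, fun hg => ⟨hg, ?_⟩⟩
      rintro x (rfl | rfl | rfl)
      · exact fixP g hg
      · exact hall ⟨g, hg⟩
      · exact fix2 ⟨g, hg⟩ (hall ⟨g, hg⟩)
    rw [hset] at hindex2
    have hpos : 0 < Nat.card L := Nat.card_pos
    have : Nat.card L = 2 * Nat.card L := hindex2
    omega
  have hw : Nat.card {g : L // D g ∧ α g / β g = 1} = w := by
    rw [← hZcard]
    exact Nat.card_congr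
      { toFun := fun g => ⟨g.1.1, g.1.2, (hker g.1).1 g.2⟩
        invFun := fun g => ⟨⟨g.1, g.2.1⟩, (hker ⟨g.1, g.2.1⟩).2 g.2.2⟩
        left_inv := fun _ => rfl
        right_inv := fun _ => rfl }
  obtain ⟨φ, hsurj, hφ⟩ := H.exists_hom_dihedral hs hw hLcard
  exact ⟨φ, hsurj, fun x => (hφ x).trans (hker x)⟩
end
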